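/- There is an absolute constant C ≥ 1 such that for all positive integers m, n and every m-homogeneous polynomial P(z) = ∑_{|α|=m} a_α z^α on ℂ^n, one has ∑_{|α|=m} |a_α| ≤ C^m · (1 + n/m)^{(m-1)/2} · sup_{z ∈ 𝔻^n} |∑_{|α|=m} a_α z^α|. (Estimate of the Sidon constant of the m-homogeneous monomials in n variables.) -/

import Mathlib

open Finset

/-- Evaluation of the `m`-homogeneous polynomial on `ℂ^n` with coefficient family `a`
(indexed by the multi-indices `α` with `|α| = m`) at the point `z`. -/
noncomputable def mhEval (n m : ℕ) (a : (Fin n → ℕ) → ℂ) (z : Fin n → ℂ) : ℂ :=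
  ∑ α ∈ Finset.Nat.antidiagonalTuple n m, a α * ∏ i, z i ^ α i

/-- The supremum of `|P(z)|` over the open unit polydisc `𝔻^n`. -/
noncomputable def polydiscSup (n m : ℕ) (a : (Fin n → ℕ) → ℂ) : ℝ :=
  sSup {x : ℝ | ∃ z : Fin n → ℂ, (∀ i, ‖z i‖ < 1) ∧ x = ‖mhEval n m a z‖}


lemma sid_one {N : ℕ} {ζ : ℂ} (hN : 0 < N) (hζ : IsPrimitiveRoot ζ N) (a b : ℕ) (ha : a < N) (hb : b < N) :
    ∑ j : Fin N, ((ζ ^ (j : ℕ)) ^ a * (starRingEnd ℂ) ((ζ ^ (j : ℕ)) ^ b)) = if a = b then (N : ℂ) else 0 := by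
  have hn : ‖ζ‖ = 1 := Complex.norm_eq_one_of_pow_eq_one hζ.pow_eq_one hN.ne'
  have hc : ζ * (starRingEnd ℂ) ζ = 1 := by
    rw [Complex.mul_conj, Complex.normSq_eq_norm_sq, hn]; simp
  set x : ℂ := ζ ^ a * ((starRingEnd ℂ) ζ) ^ b with hx
  have h1 : ∀ j : Fin N, ((ζ ^ (j : ℕ)) ^ a * (starRingEnd ℂ) ((ζ ^ (j : ℕ)) ^ b)) = x ^ (j : ℕ) := by
    intro j
    simp only [map_pow, hx, mul_pow, ← pow_mul]
    rw [mul_comm a, mul_comm b]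
  rw [Finset.sum_congr rfl (fun j _ => h1 j), Fin.sum_univ_eq_sum_range (fun j => x ^ j)]
  split_ifs with hab
  · subst hab
    have : x = 1 := by rw [hx, ← mul_pow, hc, one_pow]
    simp [this]
  · have hx1 : x ≠ 1 := by
      intro h
      apply hab
      apply hζ.pow_inj ha hb
      calc ζ ^ a = ζ ^ a * (ζ * (starRingEnd ℂ) ζ) ^ b := by rw [hc]; simp
        _ = x * ζ ^ b := by rw [hx, mul_pow]; ring
        _ = ζ ^ b := by rw [h, one_mul]
    have hxN : x ^ N = 1 := by
      rw [hx, mul_pow, ← pow_mul, ← pow_mul, mul_comm a, mul_comm b, pow_mul, pow_mul, ← map_pow, hζ.pow_eq_one]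
      simp
    have := mul_neg_geom_sum x N
    rw [hxN, sub_self] at this
    rcases mul_eq_zero.1 this with h | h
    · exact absurd (sub_eq_zero.1 h).symm hx1
    · exact h

lemma sid_orth {N n : ℕ} {ζ : ℂ} (hN : 0 < N) (hζ : IsPrimitiveRoot ζ N) (α β : Fin n → ℕ)
    (ha : ∀ i, α i < N) (hb : ∀ i, β i < N) :
    ∑ g : Fin n → Fin N, ((∏ i, (ζ ^ (g i : ℕ)) ^ α i) * (starRingEnd ℂ) (∏ i, (ζ ^ (g i : ℕ)) ^ β i))
      = if α = β then (N : ℂ) ^ n else 0 := by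
  simp only [map_prod, ← Finset.prod_mul_distrib]
  rw [← Fintype.piFinset_univ, ← Finset.prod_univ_sum (fun _ : Fin n => (Finset.univ : Finset (Fin N)))
    (fun i j => (ζ ^ (j : ℕ)) ^ α i * (starRingEnd ℂ) ((ζ ^ (j : ℕ)) ^ β i))]
  simp only [sid_one hN hζ _ _ (ha _) (hb _)]
  split_ifs with h
  · subst h; simp
  · obtain ⟨i, hi⟩ := Function.ne_iff.1 h
    exact Finset.prod_eq_zero (Finset.mem_univ i) (by simp [hi])

lemma sid_parseval {N n : ℕ} {ζ : ℂ} (hN : 0 < N) (hζ : IsPrimitiveRoot ζ N) (S : Finset (Fin n → ℕ))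
    (hS : ∀ α ∈ S, ∀ i, α i < N) (c : (Fin n → ℕ) → ℂ) :
    ∑ g : Fin n → Fin N, ‖∑ α ∈ S, c α * ∏ i, (ζ ^ (g i : ℕ)) ^ α i‖ ^ 2
      = (N : ℝ) ^ n * ∑ α ∈ S, ‖c α‖ ^ 2 := by
  apply Complex.ofReal_injective
  push_cast
  simp only [← Complex.mul_conj', map_sum, map_mul]
  simp only [Finset.sum_mul_sum]
  rw [Finset.sum_comm, Finset.mul_sum]
  refine Finset.sum_congr rfl fun α hα => ?_
  rw [Finset.sum_comm]
  have : ∀ β ∈ S, ∑ g : Fin n → Fin N, c α * (∏ i, (ζ ^ (g i : ℕ)) ^ α i) *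
      ((starRingEnd ℂ) (c β) * (starRingEnd ℂ) (∏ i, (ζ ^ (g i : ℕ)) ^ β i))
      = if α = β then (N : ℂ) ^ n * (c α * (starRingEnd ℂ) (c β)) else 0 := by
    intro β hβ
    have := sid_orth hN hζ α β (hS α hα) (hS β hβ)
    calc _ = (c α * (starRingEnd ℂ) (c β)) * ∑ g : Fin n → Fin N, ((∏ i, (ζ ^ (g i : ℕ)) ^ α i) * (starRingEnd ℂ) (∏ i, (ζ ^ (g i : ℕ)) ^ β i)) := by
          rw [Finset.mul_sum]; refine Finset.sum_congr rfl fun g _ => ?_; ring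
      _ = _ := by rw [this]; split_ifs <;> ring
  rw [Finset.sum_congr rfl this]
  simp [hα]

lemma sid_fiber (n m : ℕ) (γ : Fin n → ℕ) (hγ : ∑ i, γ i = 2 * m) (S : Finset ((Fin n → ℕ) × (Fin n → ℕ))) :
    #{p ∈ S | p.1 + p.2 = γ} ≤ 4 ^ m := by
  calc #{p ∈ S | p.1 + p.2 = γ} ≤ #(Fintype.piFinset fun i => Finset.range (γ i + 1)) := by
        apply Finset.card_le_card_of_injOn (fun p => p.1)
        · intro p hp
          simp only [Finset.coe_filter, Set.mem_ofPred_eq] at hp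
          simp only [Finset.mem_coe, Fintype.mem_piFinset, Finset.mem_range]
          intro i
          have := congrFun hp.2 i
          simp at this; omega
        · intro p hp q hq h
          simp only [Finset.coe_filter, Set.mem_ofPred_eq] at hp hq
          refine Prod.ext h ?_
          have h2 := hp.2.trans hq.2.symm
          simp only at h
          rw [h] at h2
          exact add_left_cancel h2
    _ = ∏ i, (γ i + 1) := by simp
    _ ≤ ∏ i, 2 ^ γ i := Finset.prod_le_prod' fun i _ => Nat.lt_two_pow_self
    _ = 4 ^ m := by rw [Finset.prod_pow_eq_pow_sum, hγ, pow_mul]; norm_num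

lemma sid_L4 {N n m : ℕ} {ζ : ℂ} (hN : 2 * m < N) (hζ : IsPrimitiveRoot ζ N) (c : (Fin n → ℕ) → ℂ) :
    ∑ g : Fin n → Fin N, ‖∑ α ∈ Finset.Nat.antidiagonalTuple n m, c α * ∏ i, (ζ ^ (g i : ℕ)) ^ α i‖ ^ 4
      ≤ (N : ℝ) ^ n * (4 ^ m * (∑ α ∈ Finset.Nat.antidiagonalTuple n m, ‖c α‖ ^ 2) ^ 2) := by
  set T := Finset.Nat.antidiagonalTuple n m with hT
  set T2 := Finset.Nat.antidiagonalTuple n (2 * m) with hT2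
  have hmap : ∀ p ∈ T ×ˢ T, p.1 + p.2 ∈ T2 := by
    intro p hp
    rw [Finset.mem_product, hT, Finset.Nat.mem_antidiagonalTuple, Finset.Nat.mem_antidiagonalTuple] at hp
    rw [hT2, Finset.Nat.mem_antidiagonalTuple]
    simp [Finset.sum_add_distrib, hp.1, hp.2]; ring
  set d : (Fin n → ℕ) → ℂ := fun γ => ∑ p ∈ T ×ˢ T with p.1 + p.2 = γ, c p.1 * c p.2 with hd
  have hsq : ∀ g : Fin n → Fin N, ‖∑ α ∈ T, c α * ∏ i, (ζ ^ (g i : ℕ)) ^ α i‖ ^ 4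
      = ‖∑ γ ∈ T2, d γ * ∏ i, (ζ ^ (g i : ℕ)) ^ γ i‖ ^ 2 := by
    intro g
    have : (∑ α ∈ T, c α * ∏ i, (ζ ^ (g i : ℕ)) ^ α i) ^ 2 = ∑ γ ∈ T2, d γ * ∏ i, (ζ ^ (g i : ℕ)) ^ γ i := by
      rw [sq, Finset.sum_mul_sum, ← Finset.sum_product', ← Finset.sum_fiberwise_of_maps_to hmap]
      refine Finset.sum_congr rfl fun γ _ => ?_
      rw [hd, Finset.sum_mul]
      refine Finset.sum_congr rfl fun p hp => ?_
      rw [← (Finset.mem_filter.1 hp).2]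
      simp only [Pi.add_apply, pow_add, Finset.prod_mul_distrib]
      ring
    rw [← this, norm_pow]; ring
  simp only [hsq]
  rw [sid_parseval (by omega) hζ T2 ?_ d]
  · gcongr
    have h1 : ∀ γ ∈ T2, ‖d γ‖ ^ 2 ≤ 4 ^ m * ∑ p ∈ T ×ˢ T with p.1 + p.2 = γ, ‖c p.1‖ ^ 2 * ‖c p.2‖ ^ 2 := by
      intro γ hγ
      have hf := sid_fiber n m γ (Finset.Nat.mem_antidiagonalTuple.1 hγ) (T ×ˢ T)
      calc ‖d γ‖ ^ 2 ≤ (∑ p ∈ T ×ˢ T with p.1 + p.2 = γ, ‖c p.1‖ * ‖c p.2‖) ^ 2 := by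
            gcongr
            refine (norm_sum_le _ _).trans_eq ?_
            simp
        _ ≤ _ := sq_sum_le_card_mul_sum_sq
        _ ≤ _ := by
            simp only [mul_pow]
            gcongr
            exact_mod_cast hf
    refine (Finset.sum_le_sum h1).trans_eq ?_
    rw [← Finset.mul_sum, Finset.sum_fiberwise_of_maps_to hmap (fun p => ‖c p.1‖ ^ 2 * ‖c p.2‖ ^ 2), sq (∑ α ∈ T, _),
      Finset.sum_mul_sum, ← Finset.sum_product']
  · intro γ hγ i
    have := Finset.Nat.mem_antidiagonalTuple.1 hγ
    have h2 := Finset.single_le_sum (f := γ) (fun i _ => Nat.zero_le _) (Finset.mem_univ i)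
    omega

lemma sid_holder {ι : Type*} (s : Finset ι) (f : ι → ℝ) (hf : ∀ i, 0 ≤ f i) :
    (∑ i ∈ s, f i ^ 2) ^ 3 ≤ (∑ i ∈ s, f i) ^ 2 * ∑ i ∈ s, f i ^ 4 := by
  have h1 : (∑ i ∈ s, f i ^ 2) ^ 2 ≤ (∑ i ∈ s, f i) * ∑ i ∈ s, f i ^ 3 :=
    Finset.sum_sq_le_sum_mul_sum_of_sq_le_mul s (fun i _ => hf i) (fun i _ => pow_nonneg (hf i) 3) (fun i _ => le_of_eq (by ring))
  have h2 : (∑ i ∈ s, f i ^ 3) ^ 2 ≤ (∑ i ∈ s, f i ^ 2) * ∑ i ∈ s, f i ^ 4 :=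
    Finset.sum_sq_le_sum_mul_sum_of_sq_le_mul s (fun i _ => pow_nonneg (hf i) 2) (fun i _ => pow_nonneg (hf i) 4) (fun i _ => le_of_eq (by ring))
  have p1 : 0 ≤ ∑ i ∈ s, f i := Finset.sum_nonneg fun i _ => hf i
  have p2 : 0 ≤ ∑ i ∈ s, f i ^ 2 := Finset.sum_nonneg fun i _ => pow_nonneg (hf i) 2
  have p4 : 0 ≤ ∑ i ∈ s, f i ^ 4 := Finset.sum_nonneg fun i _ => pow_nonneg (hf i) 4
  rcases p2.eq_or_lt with h | h
  · rw [← h]; simp; positivity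
  · refine le_of_mul_le_mul_left ?_ h
    calc (∑ i ∈ s, f i ^ 2) * (∑ i ∈ s, f i ^ 2) ^ 3 = ((∑ i ∈ s, f i ^ 2) ^ 2) ^ 2 := by ring
      _ ≤ ((∑ i ∈ s, f i) * ∑ i ∈ s, f i ^ 3) ^ 2 := by gcongr
      _ = (∑ i ∈ s, f i) ^ 2 * (∑ i ∈ s, f i ^ 3) ^ 2 := by ring
      _ ≤ (∑ i ∈ s, f i) ^ 2 * ((∑ i ∈ s, f i ^ 2) * ∑ i ∈ s, f i ^ 4) := by gcongr
      _ = _ := by ring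

/-- `L²` norm is controlled by the `L¹` norm. -/
lemma sid_L1 {N n m : ℕ} {ζ : ℂ} (hN : 2 * m < N) (hζ : IsPrimitiveRoot ζ N) (c : (Fin n → ℕ) → ℂ) :
    (N : ℝ) ^ n * √(∑ α ∈ Finset.Nat.antidiagonalTuple n m, ‖c α‖ ^ 2) ≤
      2 ^ m * ∑ g : Fin n → Fin N, ‖∑ α ∈ Finset.Nat.antidiagonalTuple n m, c α * ∏ i, (ζ ^ (g i : ℕ)) ^ α i‖ := by
  have h4 := sid_L4 hN hζ c
  have h2 := sid_parseval (by omega) hζ (Finset.Nat.antidiagonalTuple n m) (fun γ hγ i => by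
    have := Finset.Nat.mem_antidiagonalTuple.1 hγ
    have h2 := Finset.single_le_sum (f := γ) (fun i _ => Nat.zero_le _) (Finset.mem_univ i)
    omega) c
  have hh := sid_holder Finset.univ (fun g : Fin n → Fin N => ‖∑ α ∈ Finset.Nat.antidiagonalTuple n m, c α * ∏ i, (ζ ^ (g i : ℕ)) ^ α i‖) (fun _ => norm_nonneg _)
  rw [h2] at hh
  set A := ∑ g : Fin n → Fin N, ‖∑ α ∈ Finset.Nat.antidiagonalTuple n m, c α * ∏ i, (ζ ^ (g i : ℕ)) ^ α i‖ with hA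
  set E := ∑ α ∈ Finset.Nat.antidiagonalTuple n m, ‖c α‖ ^ 2 with hE
  have hA0 : 0 ≤ A := Finset.sum_nonneg fun _ _ => norm_nonneg _
  have hE0 : 0 ≤ E := Finset.sum_nonneg fun _ _ => by positivity
  have hNp : (0 : ℝ) < (N : ℝ) ^ n := by
    have : 0 < N := by omega
    positivity
  rcases hE0.eq_or_lt with h | h
  · rw [← h]; simp; positivity
  · have h5 : ((N : ℝ) ^ n * E) ^ 3 ≤ A ^ 2 * ((N : ℝ) ^ n * (4 ^ m * E ^ 2)) := hh.trans (by gcongr)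
    have h6 : ((N : ℝ) ^ n) ^ 2 * E ≤ 4 ^ m * A ^ 2 := by
      have : 0 < (N : ℝ) ^ n * E ^ 2 := by positivity
      refine le_of_mul_le_mul_left ?_ this
      linarith
    apply le_of_sq_le_sq _ (by positivity)
    rw [mul_pow, mul_pow, Real.sq_sqrt hE0]
    refine h6.trans_eq ?_
    rw [← pow_mul, mul_comm m 2, pow_mul]; norm_num

lemma sid_bdd (n m : ℕ) (a : (Fin n → ℕ) → ℂ) :
    BddAbove {x : ℝ | ∃ z : Fin n → ℂ, (∀ i, ‖z i‖ < 1) ∧ x = ‖mhEval n m a z‖} := by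
  refine ⟨∑ α ∈ Finset.Nat.antidiagonalTuple n m, ‖a α‖, ?_⟩
  rintro x ⟨z, hz, rfl⟩
  refine (norm_sum_le _ _).trans (Finset.sum_le_sum fun α _ => ?_)
  rw [norm_mul, norm_prod]
  refine mul_le_of_le_one_right (norm_nonneg _) (Finset.prod_le_one (fun i _ => norm_nonneg _) fun i _ => ?_)
  rw [norm_pow]
  exact pow_le_one₀ (norm_nonneg _) (hz i).le

lemma sid_hom (n m : ℕ) (a : (Fin n → ℕ) → ℂ) (r : ℂ) (z : Fin n → ℂ) :
    mhEval n m a (fun i => r * z i) = r ^ m * mhEval n m a z := by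
  unfold mhEval
  rw [Finset.mul_sum]
  refine Finset.sum_congr rfl fun α hα => ?_
  simp only [mul_pow, Finset.prod_mul_distrib]
  rw [Finset.prod_pow_eq_pow_sum, Finset.Nat.mem_antidiagonalTuple.1 hα]
  ring

lemma sid_le (n m : ℕ) (a : (Fin n → ℕ) → ℂ) (z : Fin n → ℂ) (hz : ∀ i, ‖z i‖ ≤ 2) :
    ‖mhEval n m a z‖ ≤ 3 ^ m * polydiscSup n m a := by
  have h : mhEval n m a z = 3 ^ m * mhEval n m a (fun i => (1 / 3) * z i) := by
    rw [← sid_hom]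
    congr 1
    ext i
    ring
  rw [h, norm_mul, norm_pow]
  have h3 : ‖(3 : ℂ)‖ = 3 := by norm_num
  rw [h3]
  gcongr
  refine le_csSup (sid_bdd n m a) ⟨_, fun i => ?_, rfl⟩
  rw [norm_mul]
  have := hz i
  norm_num
  linarith

lemma sid_deriv (n m : ℕ) (a : (Fin n → ℕ) → ℂ) (w u : Fin n → ℂ) :
    HasDerivAt (fun t : ℂ => mhEval n m a (fun i => w i * (1 + t * u i)))
      (∑ k, u k * ∑ α ∈ Finset.Nat.antidiagonalTuple n m, (α k * a α) * ∏ i, w i ^ α i) 0 := by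
  unfold mhEval
  have h1 : ∀ α : Fin n → ℕ, HasDerivAt (fun t : ℂ => ∏ i, (w i * (1 + t * u i)) ^ α i)
      (∑ k, u k * α k * ∏ i, w i ^ α i) 0 := by
    intro α
    have h2 : ∀ i ∈ (Finset.univ : Finset (Fin n)),
        HasDerivAt (fun t : ℂ => (w i * (1 + t * u i)) ^ α i) (w i ^ α i * (α i * u i)) 0 := by
      intro i _
      have h3 : HasDerivAt (fun t : ℂ => 1 + t * u i) (u i) 0 := by
        simpa using ((hasDerivAt_id (0 : ℂ)).mul_const (u i)).const_add 1
      have h4 := (h3.pow (α i)).const_mul (w i ^ α i)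
      simp only [zero_mul, add_zero, one_pow, mul_one] at h4
      convert! h4 using 1
      ext t
      simp [mul_pow]
    have h5 := HasDerivAt.fun_finsetProd h2
    convert! h5 using 1
    refine Finset.sum_congr rfl fun k _ => ?_
    simp only [zero_mul, add_zero, mul_one, smul_eq_mul]
    rw [← Finset.mul_prod_erase _ _ (Finset.mem_univ k)]
    ring
  have h6 := HasDerivAt.fun_sum (u := Finset.Nat.antidiagonalTuple n m) (fun α _ => (h1 α).const_mul (a α))
  convert! h6 using 1
  simp only [Finset.mul_sum]
  rw [Finset.sum_comm]
  refine Finset.sum_congr rfl fun α _ => Finset.sum_congr rfl fun k _ => ?_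
  ring

lemma sid_cauchy (n m : ℕ) (a : (Fin n → ℕ) → ℂ) (w : Fin n → ℂ) (hw : ∀ i, ‖w i‖ ≤ 1) :
    ∑ k, ‖∑ α ∈ Finset.Nat.antidiagonalTuple n m, (α k * a α) * ∏ i, w i ^ α i‖
      ≤ 3 ^ m * polydiscSup n m a := by
  have hu : ∀ q : ℂ, ∃ u : ℂ, ‖u‖ ≤ 1 ∧ u * q = ‖q‖ := by
    intro q
    by_cases hq : q = 0
    · exact ⟨0, by simp, by simp [hq]⟩
    · refine ⟨‖q‖ / q, ?_, ?_⟩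
      · rw [norm_div]; simp [hq]
      · field_simp
  choose v hv1 hv2 using hu
  set Q : Fin n → ℂ := fun k => ∑ α ∈ Finset.Nat.antidiagonalTuple n m, (α k * a α) * ∏ i, w i ^ α i with hQ
  have hd := sid_deriv n m a w (fun k => v (Q k))
  have hdiff : Differentiable ℂ (fun t : ℂ => mhEval n m a (fun i => w i * (1 + t * v (Q i)))) := by
    unfold mhEval
    fun_prop
  have hc := Complex.norm_deriv_le_of_forall_mem_sphere_norm_le (c := 0) (R := 1)
    (C := 3 ^ m * polydiscSup n m a) one_pos hdiff.diffContOnCl (by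
      intro t ht
      apply sid_le
      intro i
      have ht1 : ‖t‖ = 1 := by simpa using ht
      have h1 : ‖1 + t * v (Q i)‖ ≤ 2 := by
        refine (norm_add_le _ _).trans ?_
        rw [norm_mul, ht1, norm_one, one_mul]
        linarith [hv1 (Q i)]
      rw [norm_mul]
      calc ‖w i‖ * ‖1 + t * v (Q i)‖ ≤ 1 * 2 := by gcongr; exact hw i
        _ = 2 := by norm_num)
  rw [hd.deriv, div_one] at hc
  have he : ∑ k, v (Q k) * Q k = ((∑ k, ‖Q k‖ : ℝ) : ℂ) := by
    push_cast
    exact Finset.sum_congr rfl fun k _ => hv2 _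
  have hc2 : ‖∑ k, v (Q k) * Q k‖ ≤ 3 ^ m * polydiscSup n m a := hc
  rw [he, Complex.norm_real, Real.norm_of_nonneg (Finset.sum_nonneg fun _ _ => norm_nonneg _)] at hc2
  exact hc2

lemma sid_card (n m : ℕ) (hm : 0 < m) (k : Fin n) :
    (#{α ∈ Finset.Nat.antidiagonalTuple n m | α k ≠ 0} : ℝ) ≤ 4 ^ m * (1 + (n : ℝ) / m) ^ (m - 1) := by
  have h1 : #{α ∈ Finset.Nat.antidiagonalTuple n m | α k ≠ 0} ≤
      #((Finset.univ : Finset (Fin n)).finsuppAntidiag (m - 1)) := by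
    apply Finset.card_le_card_of_injOn (fun α => Finsupp.equivFunOnFinite.symm (α - Pi.single k 1))
    · intro α hα
      simp only [Finset.coe_filter, Set.mem_ofPred_eq, Finset.Nat.mem_antidiagonalTuple] at hα
      simp only [Finset.mem_coe, Finset.mem_finsuppAntidiag, Finset.subset_univ, and_true]
      have h2 : α = (α - Pi.single k 1) + Pi.single k 1 := by
        ext i
        by_cases hi : i = k
        · subst hi
          have := hα.2
          simp
          omega
        · simp [hi]
      have h3 := hα.1
      rw [h2] at h3
      simp only [Pi.add_apply, Finset.sum_add_distrib, Finset.sum_pi_single', Finset.mem_univ, if_true] at h3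
      have : ∑ i, (α - Pi.single k 1 : Fin n → ℕ) i = m - 1 := by omega
      simpa using this
    · intro α hα β hβ h
      simp only [Finset.coe_filter, Set.mem_ofPred_eq] at hα hβ
      have h := Finsupp.equivFunOnFinite.symm.injective h
      ext i
      have h2 := congrFun h i
      by_cases hi : i = k
      · subst hi
        have := hα.2
        have := hβ.2
        simp at h2
        omega
      · simpa [hi] using h2
  rw [Finset.card_finsuppAntidiag_nat_eq_choose] at h1
  simp only [Finset.card_univ, Fintype.card_fin] at h1
  have hm' : (0 : ℝ) < m := by exact_mod_cast hm
  have h2 : ((n + (m - 1) - 1).choose (m - 1) : ℝ) ≤ ((n : ℝ) + m) ^ (m - 1) / (m - 1).factorial := by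
    refine (Nat.choose_le_pow_div (α := ℝ) (m - 1) _).trans ?_
    gcongr
    have : n + (m - 1) - 1 ≤ n + m := by omega
    exact_mod_cast this
  have h3 : (m : ℝ) ^ (m - 1) / (m - 1).factorial ≤ 4 ^ m := by
    have e1 : (m : ℝ) ^ (m - 1) / (m - 1).factorial = (m : ℝ) ^ m / m.factorial := by
      obtain ⟨l, rfl⟩ : ∃ l, m = l + 1 := ⟨m - 1, by omega⟩
      simp only [Nat.add_sub_cancel, Nat.factorial_succ, pow_succ]
      push_cast
      field_simp
    rw [e1]
    refine (Real.pow_div_factorial_le_exp (m : ℝ) hm'.le m).trans ?_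
    rw [← Real.exp_one_pow]
    gcongr
    linarith [Real.exp_one_lt_d9]
  calc (#{α ∈ Finset.Nat.antidiagonalTuple n m | α k ≠ 0} : ℝ) ≤ ((n + (m - 1) - 1).choose (m - 1) : ℝ) := by
        exact_mod_cast h1
    _ ≤ _ := h2
    _ = ((m : ℝ) ^ (m - 1) / (m - 1).factorial) * (1 + (n : ℝ) / m) ^ (m - 1) := by
        have : (n : ℝ) + m = m * (1 + n / m) := by field_simp; ring
        rw [this, mul_pow]; ring
    _ ≤ _ := by gcongr

/-- Estimate of the Sidon constant of the `m`-homogeneous monomials in `n` variables. -/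
theorem sidon_constant_estimate :
    ∃ C : ℝ, 1 ≤ C ∧ ∀ (m n : ℕ), 0 < m → 0 < n → ∀ a : (Fin n → ℕ) → ℂ,
      ∑ α ∈ Finset.Nat.antidiagonalTuple n m, ‖a α‖
        ≤ C ^ m * (1 + (n : ℝ) / (m : ℝ)) ^ (((m : ℝ) - 1) / 2) * polydiscSup n m a := by
  refine ⟨12, by norm_num, fun m n hm hn a => ?_⟩
  set T := Finset.Nat.antidiagonalTuple n m with hT
  set x : ℝ := 1 + (n : ℝ) / m with hx
  have hx0 : 0 ≤ x := by positivity
  set R : ℝ := 2 ^ m * x ^ (((m : ℝ) - 1) / 2) with hR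
  have hR0 : 0 ≤ R := by positivity
  have hR2 : R ^ 2 = 4 ^ m * x ^ (m - 1) := by
    rw [hR, mul_pow]
    congr 1
    · rw [← pow_mul, mul_comm m 2, pow_mul]; norm_num
    · rw [← Real.rpow_natCast, ← Real.rpow_mul hx0, ← Real.rpow_natCast]
      congr 1
      rw [Nat.cast_sub hm]; push_cast; ring
  set E : Fin n → ℝ := fun k => √(∑ α ∈ T, ‖(α k : ℂ) * a α‖ ^ 2) with hE
  -- step 1
  have s1 : ∑ α ∈ T, ‖a α‖ ≤ ∑ k, ∑ α ∈ T with α k ≠ 0, ‖a α‖ := by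
    simp only [Finset.sum_filter]
    rw [Finset.sum_comm]
    refine Finset.sum_le_sum fun α hα => ?_
    have hs := Finset.Nat.mem_antidiagonalTuple.1 hα
    obtain ⟨k, hk⟩ : ∃ k, α k ≠ 0 := by
      by_contra! h
      simp [h] at hs
      omega
    calc ‖a α‖ = if α k ≠ 0 then ‖a α‖ else 0 := by simp [hk]
      _ ≤ _ := Finset.single_le_sum (f := fun k => if α k ≠ 0 then ‖a α‖ else 0)
        (fun i _ => by positivity) (Finset.mem_univ k)
  -- step 2
  have s2 : ∀ k, ∑ α ∈ T with α k ≠ 0, ‖a α‖ ≤ R * E k := by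
    intro k
    apply le_of_sq_le_sq _ (by positivity)
    rw [mul_pow, hE, Real.sq_sqrt (by positivity), hR2]
    refine sq_sum_le_card_mul_sum_sq.trans ?_
    gcongr
    · exact sid_card n m hm k
    · rw [Finset.sum_filter]
      refine Finset.sum_le_sum fun α _ => ?_
      split_ifs with h
      · rw [norm_mul]
        have : (1 : ℝ) ≤ ‖(α k : ℂ)‖ := by
          rw [Complex.norm_natCast]
          exact_mod_cast Nat.one_le_iff_ne_zero.2 h
        gcongr
        exact le_mul_of_one_le_left (norm_nonneg _) this
      · positivity
  -- step 3
  set N := 2 * m + 1 with hN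
  have hζ := Complex.isPrimitiveRoot_exp N (by omega)
  set ζ := Complex.exp (2 * Real.pi * Complex.I / N) with hζd
  have hnorm : ‖ζ‖ = 1 := Complex.norm_eq_one_of_pow_eq_one hζ.pow_eq_one (by omega)
  have hNp : (0 : ℝ) < (N : ℝ) ^ n := by positivity
  have s3 : ∑ k, E k ≤ 2 ^ m * (3 ^ m * polydiscSup n m a) := by
    refine le_of_mul_le_mul_left ?_ hNp
    calc (N : ℝ) ^ n * ∑ k, E k = ∑ k, (N : ℝ) ^ n * E k := Finset.mul_sum _ _ _
      _ ≤ ∑ k, 2 ^ m * ∑ g : Fin n → Fin N, ‖∑ α ∈ T, (α k * a α) * ∏ i, (ζ ^ (g i : ℕ)) ^ α i‖ :=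
          Finset.sum_le_sum fun k _ => sid_L1 (by omega) hζ (fun α => (α k : ℂ) * a α)
      _ = 2 ^ m * ∑ g : Fin n → Fin N, ∑ k, ‖∑ α ∈ T, (α k * a α) * ∏ i, (ζ ^ (g i : ℕ)) ^ α i‖ := by
          rw [← Finset.mul_sum, Finset.sum_comm]
      _ ≤ 2 ^ m * ∑ g : Fin n → Fin N, (3 ^ m * polydiscSup n m a) := by
          gcongr with g
          exact sid_cauchy n m a (fun i => ζ ^ (g i : ℕ)) (fun i => by simp [hnorm])
      _ = _ := by
          simp only [Finset.sum_const, Finset.card_univ, Fintype.card_pi, Fintype.card_fin, Finset.prod_const, nsmul_eq_mul]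
          push_cast
          ring
  calc ∑ α ∈ T, ‖a α‖ ≤ ∑ k, R * E k := s1.trans (Finset.sum_le_sum fun k _ => s2 k)
    _ = R * ∑ k, E k := (Finset.mul_sum _ _ _).symm
    _ ≤ R * (2 ^ m * (3 ^ m * polydiscSup n m a)) := by gcongr
    _ = _ := by
      have : (12 : ℝ) ^ m = 2 ^ m * 2 ^ m * 3 ^ m := by rw [← mul_pow, ← mul_pow]; norm_num
      rw [this, hR]; ring
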